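/- Let X be an ultrametric space and let 𝓑 be an FD family in X that cannot be strengthened to an FD family 𝓑'' such that X has the 𝓑''-extremality property. Then at least one of the following holds: (1) there exists an FD family 𝓑' strengthening 𝓑 such that there are infinitely many balls which are r-maximal 𝓑'-non-extremal in X; or (2) there exists an infinite strictly decreasing sequence of balls C_0 ⊋ C_1 ⊋ … such that for every k the ball C_{k+1} is r-maximal non-extremal in C_k (where C_k is regarded as an ultrametric space in its own right, with its own isometry group), and C_0 is r-maximal 𝓑-non-extremal in X. -/

import Mathlib

/-!
Only the group `τ(Id, F)` matters for `F`-extremality, so finite sets `F` of balls can be used in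
place of FD families: the minimal members of `F` form an FD family with the same group
(`exists_fd`).

Every `F`-non-extremal ball lies in an `r`-maximal one (`exists_rmax`): its orbit is finite, so the
group moves its center `x` by only finitely many distances that are at least the radius, and the
largest such distance `s` gives the `r`-maximal ball `ball x s`.

Let `M` be the set of `r`-maximal `F`-non-extremal balls and suppose it is finite. Each of them has
a finite orbit, so `τ(Id, F ∪ M)` has finite index in `τ(Id, F)`; hence infinite orbits stay
infinite and every `(F ∪ M)`-non-extremal ball is `F`-non-extremal (`extremal_union`). It is thus
properly contained in some `C ∈ M`. No member of `F ∪ M` lies properly inside `C`, and an isometry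
of the ball `C` extends by the identity to an isometry of `X`. So the orbits of subsets of `C` under
`τ(Id, F ∪ M)` and under `Iso(C)` agree (`extremal_subtype_iff`), and `r`-maximal
`(F ∪ M)`-non-extremal balls inside `C` are `r`-maximal non-extremal in `C`
(`rmax_subtype`).

If the first alternative fails, iterating `F ↦ F ∪ M` from `𝓑` gives finite levels, which are
nonempty by hypothesis, and every member of a level has a parent in the previous one. An infinite
branch, which exists by compactness, is the sequence of the second alternative.
-/


open Metric Set Topology

namespace UltraGen

variable {X : Type*} [MetricSpace X]

/-- `B` is a ball of radius `r` (i.e. `B = ball x r` for some center, with `r > 0`). -/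
def IsBallRad (B : Set X) (r : ℝ) : Prop := 0 < r ∧ ∃ x : X, B = Metric.ball x r

/-- `B` is a ball in `X`. -/
def IsBall (B : Set X) : Prop := ∃ r, IsBallRad B r

/-- An FD family: a finite family of pairwise disjoint balls. -/
def FDFamily (𝓑 : Set (Set X)) : Prop :=
  𝓑.Finite ∧ (∀ B ∈ 𝓑, IsBall B) ∧ 𝓑.Pairwise fun B B' => Disjoint B B'

/-- τ(g,𝓑) = {g' ∈ Iso(X) : g'[B] = g[B] for all B ∈ 𝓑}. -/
def tau (g : X ≃ᵢ X) (𝓑 : Set (Set X)) : Set (X ≃ᵢ X) :=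
  {g' | ∀ B ∈ 𝓑, g' '' B = g '' B}

/-- 𝓑' strengthens 𝓑 iff τ(Id,𝓑') ⊆ τ(Id,𝓑). -/
def Strengthens (𝓑' 𝓑 : Set (Set X)) : Prop :=
  tau (1 : X ≃ᵢ X) 𝓑' ⊆ tau (1 : X ≃ᵢ X) 𝓑

/-- 𝒪^𝓑(C) = {g[C] : g ∈ τ(Id,𝓑)}. -/
def orb (𝓑 : Set (Set X)) (C : Set X) : Set (Set X) :=
  (fun g : X ≃ᵢ X => g '' C) '' tau (1 : X ≃ᵢ X) 𝓑

/-- A ball `C` is 𝓑-extremal in `X` if 𝒪^𝓑(C) is infinite or a singleton. -/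
def Extremal (𝓑 : Set (Set X)) (C : Set X) : Prop :=
  (orb 𝓑 C).Infinite ∨ ∃ D, orb 𝓑 C = {D}

/-- `X` has the 𝓑-extremality property if every ball in `X` is 𝓑-extremal in `X`. -/
def ExtremalityProperty (X : Type*) [MetricSpace X] (𝓑 : Set (Set X)) : Prop :=
  ∀ C : Set X, IsBall C → Extremal 𝓑 C

/-- `C` is a ball of radius `r` which is r-maximal 𝓑-non-extremal in `X`:
`C` is 𝓑-non-extremal and every ball of radius `r' > r` containing `C` is 𝓑-extremal. -/
def RMaxNonExtremalRad (𝓑 : Set (Set X)) (C : Set X) (r : ℝ) : Prop :=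
  IsBallRad C r ∧ ¬ Extremal 𝓑 C ∧
  ∀ (C' : Set X) (r' : ℝ), r < r' → IsBallRad C' r' → C ⊆ C' → Extremal 𝓑 C'

/-- `C` is r-maximal 𝓑-non-extremal in `X` (for some radius of `C`). -/
def RMaxNonExtremal (𝓑 : Set (Set X)) (C : Set X) : Prop :=
  ∃ r, RMaxNonExtremalRad 𝓑 C r

/-- Distance between two subsets of `X`. -/
noncomputable def setDist (A B : Set X) : ℝ :=
  sInf ((fun p : X × X => dist p.1 p.2) '' A ×ˢ B)

/-- Two subsets are similar if some isometry of `X` maps one onto the other. -/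
def Similar (A B : Set X) : Prop := ∃ g : X ≃ᵢ X, g '' A = B

/-- `[B]` for a ball `B` of radius `r`: `B` together with all balls `B'` of radius `r`
similar to `B` with `dist(B,B') = r`. -/
def ballClass (B : Set X) (r : ℝ) : Set (Set X) :=
  insert B {B' | (∃ x : X, B' = Metric.ball x r) ∧ Similar B B' ∧ setDist B B' = r}

/-- `g` permutes a finite set `Z`. -/
def PermutesSet (g : X ≃ᵢ X) (Z : Set X) : Prop := g '' Z = Z

/-- `g` permutes an FD family 𝓑. -/
def PermutesFam (g : X ≃ᵢ X) (𝓑 : Set (Set X)) : Prop :=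
  (fun B => g '' B) '' 𝓑 = 𝓑

/-- The topology of pointwise convergence on the isometry group of `X`. -/
instance isoTopology (X : Type*) [PseudoEMetricSpace X] : TopologicalSpace (X ≃ᵢ X) :=
  TopologicalSpace.induced (fun g => (g : X → X)) Pi.topologicalSpace

/-- A topological group has ample generics if each diagonal conjugation action
on `G^(n+1)` has a comeager orbit. -/
def HasAmpleGenerics (G : Type*) [Group G] [TopologicalSpace G] : Prop :=
  ∀ n : ℕ, ∃ v : Fin (n + 1) → G,
    {w : Fin (n + 1) → G | ∃ g : G, ∀ i, w i = g * v i * g⁻¹} ∈ residual (Fin (n + 1) → G)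

end UltraGen

namespace UltraGen

variable {X : Type*} [MetricSpace X]

/-! ### Orbits and extremality -/

lemma mem_tau_one {F : Set (Set X)} {g : X ≃ᵢ X} :
    g ∈ tau (1 : X ≃ᵢ X) F ↔ ∀ B ∈ F, g '' B = B := by
  simp [tau]

lemma one_mem_tau (F : Set (Set X)) : (1 : X ≃ᵢ X) ∈ tau (1 : X ≃ᵢ X) F := fun _ _ => rfl

lemma self_mem_orb (F : Set (Set X)) (C : Set X) : C ∈ orb F C :=
  ⟨1, one_mem_tau F, by simp⟩

lemma extremal_iff {F : Set (Set X)} {C : Set X} :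
    Extremal F C ↔ (orb F C).Infinite ∨ ∀ g ∈ tau (1 : X ≃ᵢ X) F, g '' C = C := by
  unfold Extremal
  refine or_congr Iff.rfl ⟨?_, ?_⟩
  · rintro ⟨D, hD⟩ g hg
    have h1 : C ∈ orb F C := self_mem_orb F C
    have h2 : g '' C ∈ orb F C := ⟨g, hg, rfl⟩
    rw [hD] at h1 h2
    exact h2.trans h1.symm
  · intro h
    refine ⟨C, Set.eq_singleton_iff_unique_mem.2 ⟨self_mem_orb F C, ?_⟩⟩
    rintro _ ⟨g, hg, rfl⟩
    exact h g hg

lemma orb_finite_of_not_extremal {F : Set (Set X)} {C : Set X} (h : ¬ Extremal F C) :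
    (orb F C).Finite := by
  by_contra h'
  exact h (Or.inl h')

lemma orb_congr {F G : Set (Set X)} (h : tau (1 : X ≃ᵢ X) F = tau 1 G) (C : Set X) :
    orb F C = orb G C := by
  unfold orb; rw [h]

lemma extremal_congr {F G : Set (Set X)} (h : tau (1 : X ≃ᵢ X) F = tau 1 G) :
    Extremal F = Extremal G := by
  funext C
  unfold Extremal; rw [orb_congr h]

lemma rmax_congr {F G : Set (Set X)} (h : tau (1 : X ≃ᵢ X) F = tau 1 G) :
    RMaxNonExtremal F = RMaxNonExtremal G := by
  funext C
  unfold RMaxNonExtremal RMaxNonExtremalRad; rw [extremal_congr h]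

lemma IsBall.nonempty {B : Set X} (h : IsBall B) : B.Nonempty := by
  obtain ⟨r, hr, x, rfl⟩ := h
  exact ⟨x, mem_ball_self hr⟩

/-- The group `τ(Id, F ∪ M)` has finite index in `τ(Id, F)` when the members of the finite set `M`
have finite `F`-orbits, so it cannot turn an infinite orbit into a finite one. -/
lemma extremal_union {F M : Set (Set X)} (hM : M.Finite) (hfin : ∀ C ∈ M, (orb F C).Finite)
    {D : Set X} (hD : Extremal F D) : Extremal (F ∪ M) D := by
  rw [extremal_iff] at hD ⊢
  rcases hD with hD | hD
  swap
  · exact Or.inr fun g hg => hD g fun B hB => hg B (Or.inl hB)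
  left
  intro hfinD
  apply hD
  have := hM.to_subtype
  let φ : (X ≃ᵢ X) → (M → Set X) := fun g C => g '' C
  have hφ : (φ '' tau (1 : X ≃ᵢ X) F).Finite := by
    refine (Set.Finite.pi' (fun C : M => hfin C C.2)).subset ?_
    rintro _ ⟨g, hg, rfl⟩ C
    exact ⟨g, hg, rfl⟩
  have hch : ∀ v : M → Set X, ∃ h : X ≃ᵢ X, v ∈ φ '' tau (1 : X ≃ᵢ X) F →
      h ∈ tau (1 : X ≃ᵢ X) F ∧ φ h = v := by
    intro v
    by_cases hv : v ∈ φ '' tau (1 : X ≃ᵢ X) F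
    · obtain ⟨h, h1, h2⟩ := hv
      exact ⟨h, fun _ => ⟨h1, h2⟩⟩
    · exact ⟨1, fun h => absurd h hv⟩
  choose k hk using hch
  refine (hφ.biUnion (fun v _ => hfinD.image (fun A => k v '' A))).subset ?_
  rintro _ ⟨g, hg, rfl⟩
  have hv : φ g ∈ φ '' tau (1 : X ≃ᵢ X) F := ⟨g, hg, rfl⟩
  obtain ⟨h1, h2⟩ := hk (φ g) hv
  refine Set.mem_biUnion hv ?_
  set h := k (φ g)
  rw [mem_tau_one] at hg h1
  have key : ∀ B : Set X, h '' B = g '' B → (h⁻¹ * g) '' B = B := by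
    intro B hB
    rw [IsometryEquiv.coe_mul, Set.image_comp, ← hB, ← Set.image_comp,
      ← IsometryEquiv.coe_mul]
    simp
  refine ⟨(h⁻¹ * g) '' D, ⟨h⁻¹ * g, ?_, rfl⟩, ?_⟩
  · rw [mem_tau_one]
    rintro B (hB | hB)
    · exact key B ((h1 B hB).trans (hg B hB).symm)
    · exact key B (congrFun h2 ⟨B, hB⟩)
  · change h '' ((h⁻¹ * g) '' D) = g '' D
    rw [← Set.image_comp, ← IsometryEquiv.coe_mul]
    simp

lemma exists_restriction {C : Set X} (g : X ≃ᵢ X) (hg : g '' C = C) :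
    ∃ e : C ≃ᵢ C, ∀ x : C, g x = e x := by
  have h : ∀ x, x ∈ C ↔ g x ∈ C := fun x => by
    conv_rhs => rw [← hg]
    exact (g.injective.mem_set_image).symm
  exact ⟨IsometryEquiv.mk (g.toEquiv.subtypeEquiv h)
    (Isometry.of_dist_eq fun x y => g.dist_eq x y), fun x => rfl⟩

lemma RMaxNonExtremal.isBall {F : Set (Set X)} {C : Set X} (h : RMaxNonExtremal F C) :
    IsBall C := ⟨h.choose, h.choose_spec.1⟩

lemma RMaxNonExtremal.not_extremal {F : Set (Set X)} {C : Set X} (h : RMaxNonExtremal F C) :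
    ¬ Extremal F C := h.choose_spec.2.1

variable [IsUltrametricDist X]

/-! ### Balls in ultrametric spaces and reduction to FD families -/

lemma ball_eq_of_dist_lt {x y : X} {r : ℝ} (h : dist x y < r) : ball x r = ball y r :=
  (IsUltrametricDist.ball_eq_of_mem (by simpa [mem_ball, dist_comm] using h))

lemma IsBall.subset_or_disjoint {A B : Set X} (hA : IsBall A) (hB : IsBall B) :
    A ⊆ B ∨ B ⊆ A ∨ Disjoint A B := by
  obtain ⟨r, hr, x, rfl⟩ := hA
  obtain ⟨s, hs, y, rfl⟩ := hB
  exact IsUltrametricDist.ball_subset_trichotomy x y r s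

/-- An isometry fixing a nonempty subset of a ball setwise fixes the ball setwise. -/
lemma image_eq_of_subset {g : X ≃ᵢ X} {A B : Set X} (hA : A.Nonempty) (hB : IsBall B)
    (hAB : A ⊆ B) (hg : g '' A = A) : g '' B = B := by
  obtain ⟨r, hr, x, rfl⟩ := hB
  obtain ⟨a, ha⟩ := hA
  have h1 : ball x r = ball a r := IsUltrametricDist.ball_eq_of_mem (hAB ha)
  have h2 : g a ∈ ball x r := hAB (hg ▸ Set.mem_image_of_mem g ha)
  rw [h1] at h2 ⊢
  rw [IsometryEquiv.image_ball]
  exact (IsUltrametricDist.ball_eq_of_mem h2).symm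

lemma exists_fd {F : Set (Set X)} (hF : F.Finite) (hb : ∀ B ∈ F, IsBall B) :
    ∃ G : Set (Set X), FDFamily G ∧ tau (1 : X ≃ᵢ X) G = tau 1 F := by
  refine ⟨{B | Minimal (· ∈ F) B}, ⟨hF.subset fun B hB => hB.1, fun B hB => hb B hB.1, ?_⟩, ?_⟩
  · intro A hA B hB hne
    rcases (hb A hA.1).subset_or_disjoint (hb B hB.1) with h | h | h
    · exact absurd (hB.eq_of_le hA.1 h) hne
    · exact absurd (hA.eq_of_le hB.1 h).symm hne
    · exact h
  · ext g
    rw [mem_tau_one, mem_tau_one]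
    refine ⟨fun h B hB => ?_, fun h B hB => h B hB.1⟩
    obtain ⟨A, hAB, hA⟩ := hF.exists_le_minimal hB
    exact image_eq_of_subset (hb A hA.1).nonempty (hb B hB) hAB (h A hA)

/-! ### Existence of `r`-maximal non-extremal balls -/

lemma exists_rmax {F : Set (Set X)} {C : Set X} (hC : IsBall C) (hne : ¬ Extremal F C) :
    ∃ D, RMaxNonExtremal F D ∧ C ⊆ D := by
  have hfin := orb_finite_of_not_extremal hne
  obtain ⟨r, hr, x, rfl⟩ := hC
  rw [extremal_iff] at hne
  push Not at hne
  obtain ⟨-, g₀, hg₀, hne⟩ := hne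
  have hg₀r : r ≤ dist x (g₀ x) := by
    by_contra! hlt
    rw [IsometryEquiv.image_ball] at hne
    exact hne (ball_eq_of_dist_lt hlt).symm
  let S : Set ℝ := {t | r ≤ t ∧ ∃ g ∈ tau (1 : X ≃ᵢ X) F, dist x (g x) = t}
  have hS : S.Finite := by
    refine (hfin.image (fun A => sInf (dist x '' A))).subset ?_
    rintro _ ⟨ht, g, hg, rfl⟩
    refine ⟨g '' ball x r, ⟨g, hg, rfl⟩, ?_⟩
    -- All points of the image ball are equally far from `x`.
    have : dist x '' (g '' ball x r) = {dist x (g x)} := by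
      rw [IsometryEquiv.image_ball]
      refine Set.eq_singleton_iff_unique_mem.2 ⟨⟨g x, mem_ball_self hr, rfl⟩, ?_⟩
      rintro _ ⟨y, hy, rfl⟩
      rw [mem_ball] at hy
      have h1 := IsUltrametricDist.dist_triangle_max x y (g x)
      have h2 := IsUltrametricDist.dist_triangle_max x (g x) y
      rw [dist_comm (g x) y] at h2
      rcases le_max_iff.1 h1 with h1 | h1
      · rcases le_max_iff.1 h2 with h2 | h2 <;> linarith
      · linarith
    change sInf (dist x '' (g '' ball x r)) = _
    rw [this, csInf_singleton]
  obtain ⟨s, ⟨hrs, g₁, hg₁, hg₁s⟩, hmax⟩ :=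
    hS.exists_maximalFor id S ⟨_, hg₀r, g₀, hg₀, rfl⟩
  have hs : 0 < s := hr.trans_le hrs
  have hle : ∀ g ∈ tau (1 : X ≃ᵢ X) F, dist x (g x) ≤ s := by
    intro g hg
    by_contra! hlt
    exact absurd (hmax (j := dist x (g x)) ⟨by linarith, g, hg, rfl⟩ hlt.le) (not_le.2 hlt)
  refine ⟨ball x s, ⟨s, ⟨hs, x, rfl⟩, ?_, ?_⟩, ball_subset_ball hrs⟩
  · rw [extremal_iff]
    rintro (hinf | hfix)
    · refine hinf ((hfin.image (fun A => ⋃ a ∈ A, ball a s)).subset ?_)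
      rintro _ ⟨g, hg, rfl⟩
      refine ⟨g '' ball x r, ⟨g, hg, rfl⟩, ?_⟩
      change ⋃ a ∈ g '' ball x r, ball a s = g '' ball x s
      rw [IsometryEquiv.image_ball, IsometryEquiv.image_ball]
      refine Set.Subset.antisymm (Set.iUnion₂_subset fun a ha => ?_) ?_
      · rw [ball_eq_of_dist_lt (lt_of_lt_of_le (mem_ball.1 ha) hrs)]
      · exact Set.subset_biUnion_of_mem (u := fun a => ball a s) (mem_ball_self hr)
    · have h1 := hfix g₁ hg₁
      rw [IsometryEquiv.image_ball] at h1
      have h2 : g₁ x ∈ ball x s := h1 ▸ mem_ball_self hs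
      rw [mem_ball, dist_comm] at h2
      linarith
  · rintro _ r' hr' ⟨hr'0, y, rfl⟩ hsub
    rw [extremal_iff]
    right
    intro g hg
    have hx : x ∈ ball y r' := hsub (mem_ball_self hs)
    rw [IsUltrametricDist.ball_eq_of_mem hx, IsometryEquiv.image_ball]
    exact (ball_eq_of_dist_lt ((hle g hg).trans_lt hr')).symm

/-! ### A ball as a space in its own right -/

/-- Extension of an isometry of a ball by the identity outside the ball. -/
lemma exists_extension {C : Set X} (hC : IsBall C) (e : C ≃ᵢ C) :
    ∃ g : X ≃ᵢ X, (∀ x : C, g x = e x) ∧ ∀ x ∉ C, g x = x := by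
  classical
  let p : Equiv.Perm X := Equiv.Perm.ofSubtype (p := (· ∈ C)) e.toEquiv
  have hp : ∀ x : C, p x = e x := fun x => Equiv.Perm.ofSubtype_apply_coe _ x
  have hp' : ∀ x ∉ C, p x = x := fun x hx => Equiv.Perm.ofSubtype_apply_of_not_mem _ hx
  -- Points of a ball are equally far from any point outside it.
  have hout : ∀ x ∈ C, ∀ x' ∈ C, ∀ y ∉ C, dist x y = dist x' y := by
    obtain ⟨r, hr, c, rfl⟩ := hC
    have : ∀ x ∈ ball c r, ∀ x' ∈ ball c r, ∀ y ∉ ball c r, dist x y ≤ dist x' y := by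
      intro x hx x' hx' y hy
      have hxx : dist x x' < r := by
        rw [IsUltrametricDist.ball_eq_of_mem hx'] at hx
        exact hx
      have hy' : r ≤ dist x' y := by
        rw [IsUltrametricDist.ball_eq_of_mem hx', mem_ball, dist_comm, not_lt] at hy
        exact hy
      exact (IsUltrametricDist.dist_triangle_max x x' y).trans (max_le (by linarith) le_rfl)
    exact fun x hx x' hx' y hy => le_antisymm (this x hx x' hx' y hy) (this x' hx' x hx y hy)
  refine ⟨IsometryEquiv.mk p (Isometry.of_dist_eq fun x y => ?_), hp, hp'⟩
  change dist (p x) (p y) = dist x y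
  by_cases hx : x ∈ C <;> by_cases hy : y ∈ C
  · rw [hp ⟨x, hx⟩, hp ⟨y, hy⟩]
    exact e.dist_eq ⟨x, hx⟩ ⟨y, hy⟩
  · rw [hp ⟨x, hx⟩, hp' y hy]
    exact hout _ (e ⟨x, hx⟩).2 _ hx y hy
  · rw [hp ⟨y, hy⟩, hp' x hx, dist_comm, dist_comm x y]
    exact hout _ (e ⟨y, hy⟩).2 _ hy x hx
  · rw [hp' x hx, hp' y hy]

/-- If `τ(Id, F)` fixes the ball `C` and no member of `F` lies properly inside `C`, then subsets of
`C` have the same orbits under `τ(Id, F)` and under `Iso(C)`. -/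
lemma extremal_subtype_iff {F : Set (Set X)} {C A : Set X} (hC : IsBall C)
    (hfix : ∀ g ∈ tau (1 : X ≃ᵢ X) F, g '' C = C)
    (hF : ∀ B ∈ F, C ⊆ B ∨ Disjoint B C) (hA : A ⊆ C) :
    Extremal (X := C) ∅ (Subtype.val ⁻¹' A) ↔ Extremal F A := by
  have hAv : (Subtype.val : C → X) '' (Subtype.val ⁻¹' A) = A := by
    rw [Subtype.image_preimage_coe]; exact Set.inter_eq_right.2 hA
  have himg : ∀ (g : X ≃ᵢ X) (e : C ≃ᵢ C), (∀ x : C, g x = e x) →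
      (Subtype.val : C → X) '' (e '' (Subtype.val ⁻¹' A)) = g '' A := by
    intro g e he
    conv_rhs => rw [← hAv]
    rw [← Set.image_comp, ← Set.image_comp]
    exact Set.image_congr fun x _ => (he x).symm
  have hinj : Function.Injective (fun B : Set C => (Subtype.val : C → X) '' B) :=
    Subtype.val_injective.image_injective
  have horb : orb F A = (fun B : Set C => Subtype.val '' B) ''
      orb (X := C) ∅ (Subtype.val ⁻¹' A) := by
    ext E
    constructor
    · rintro ⟨g, hg, rfl⟩
      obtain ⟨e, he⟩ := exists_restriction g (hfix g hg)
      exact ⟨_, ⟨e, mem_tau_one.2 (by simp), rfl⟩, himg g e he⟩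
    · rintro ⟨_, ⟨e, -, rfl⟩, rfl⟩
      obtain ⟨g, hg, hg'⟩ := exists_extension hC e
      refine ⟨g, mem_tau_one.2 fun B hB => ?_, (himg g e hg).symm⟩
      have hmem : ∀ x, g x ∈ B ↔ x ∈ B := by
        intro x
        by_cases hx : x ∈ C
        · have hgx : g x ∈ C := by rw [hg ⟨x, hx⟩]; exact (e ⟨x, hx⟩).2
          rcases hF B hB with h | h
          · exact ⟨fun _ => h hx, fun _ => h hgx⟩
          · exact ⟨fun h' => absurd hgx (Set.disjoint_left.1 h h'),
              fun h' => absurd hx (Set.disjoint_left.1 h h')⟩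
        · rw [hg' x hx]
      have : g ⁻¹' B = B := Set.ext hmem
      conv_lhs => rw [← this]
      exact Set.image_preimage_eq B g.surjective
  unfold Extremal
  rw [horb]
  refine or_congr (Set.infinite_image_iff hinj.injOn).symm ⟨?_, ?_⟩
  · rintro ⟨D, hD⟩
    exact ⟨Subtype.val '' D, by rw [hD, Set.image_singleton]⟩
  · rintro ⟨D, hD⟩
    obtain ⟨E, hE⟩ : (orb (X := C) ∅ (Subtype.val ⁻¹' A)).Nonempty := ⟨_, self_mem_orb _ _⟩
    refine ⟨E, Set.eq_singleton_iff_unique_mem.2 ⟨hE, fun E' hE' => hinj ?_⟩⟩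
    have h1 := Set.mem_image_of_mem (fun B : Set C => (Subtype.val : C → X) '' B) hE
    have h2 := Set.mem_image_of_mem (fun B : Set C => (Subtype.val : C → X) '' B) hE'
    rw [hD] at h1 h2
    exact h2.trans h1.symm

lemma rmax_subtype {F : Set (Set X)} {C D : Set X} (hC : IsBall C)
    (hfix : ∀ g ∈ tau (1 : X ≃ᵢ X) F, g '' C = C)
    (hF : ∀ B ∈ F, C ⊆ B ∨ Disjoint B C) (hD : RMaxNonExtremal F D) (hDC : D ⊆ C) :
    RMaxNonExtremal (X := C) ∅ (Subtype.val ⁻¹' D) := by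
  obtain ⟨r, ⟨hr, x, rfl⟩, hne, hmax⟩ := hD
  have hxC : x ∈ C := hDC (mem_ball_self hr)
  refine ⟨r, ⟨hr, ⟨x, hxC⟩, rfl⟩, ?_, ?_⟩
  · rwa [extremal_subtype_iff hC hfix hF hDC]
  · rintro _ r' hr' ⟨hr'0, y, rfl⟩ hsub
    have hxy : dist x y < r' := hsub (a := ⟨x, hxC⟩) (mem_ball_self (x := x) hr)
    have hball : ball (y : X) r' = ball x r' := (ball_eq_of_dist_lt hxy).symm
    have hpre : ball y r' = Subtype.val ⁻¹' ball (y : X) r' := rfl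
    obtain ⟨ρ, hρ, c, rfl⟩ := hC
    by_cases hsub' : ball (y : X) r' ⊆ ball c ρ
    · rw [hpre, extremal_subtype_iff ⟨ρ, hρ, c, rfl⟩ hfix hF hsub']
      exact hmax _ r' hr' ⟨hr'0, y, rfl⟩ (by rw [hball]; exact ball_subset_ball hr'.le)
    · have hsup : ball c ρ ⊆ ball (y : X) r' := by
        rcases IsUltrametricDist.ball_subset_trichotomy c (y : X) ρ r' with h | h | h
        · exact h
        · exact absurd h hsub'
        · exact absurd (mem_ball_self hr'0) (Set.disjoint_left.1 h y.2)
      have huniv : ball y r' = Set.univ := by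
        rw [hpre]
        exact Set.eq_univ_of_forall fun z => hsup z.2
      rw [huniv, extremal_iff]
      exact Or.inr fun g _ => Set.image_univ_of_surjective g.surjective

lemma RMaxNonExtremal.superset_of_subset {F : Set (Set X)} {C D : Set X} (hC : RMaxNonExtremal F C)
    (hD : RMaxNonExtremal F D) (h : C ⊆ D) : D ⊆ C := by
  obtain ⟨r, ⟨hr, x, rfl⟩, -, hmax⟩ := hC
  obtain ⟨s, ⟨hs, y, rfl⟩, hne, -⟩ := hD
  have hx := h (mem_ball_self hr)
  rcases lt_or_ge r s with hrs | hrs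
  · exact absurd (hmax _ s hrs ⟨hs, y, rfl⟩ h) hne
  · rw [IsUltrametricDist.ball_eq_of_mem hx]
    exact ball_subset_ball hrs

/-! ### The tree of `r`-maximal non-extremal balls -/

/-- One step of the construction: with `M` the finite set of `r`-maximal `F`-non-extremal balls,
every `r`-maximal `(F ∪ M)`-non-extremal ball has a parent in `M`. -/
lemma exists_parent {F : Set (Set X)} (hb : ∀ B ∈ F, IsBall B)
    (hM : {C | RMaxNonExtremal F C}.Finite) {D : Set X}
    (hD : RMaxNonExtremal (F ∪ {C | RMaxNonExtremal F C}) D) :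
    ∃ C, RMaxNonExtremal F C ∧ D ⊂ C ∧ RMaxNonExtremal (X := C) ∅ (Subtype.val ⁻¹' D) := by
  have hDF : ¬ Extremal F D := fun h => hD.not_extremal
    (extremal_union hM (fun C hC => orb_finite_of_not_extremal hC.not_extremal) h)
  obtain ⟨C, hC, hDC⟩ := exists_rmax hD.isBall hDF
  have hfix : ∀ g ∈ tau (1 : X ≃ᵢ X) (F ∪ {C | RMaxNonExtremal F C}), g '' C = C :=
    fun g hg => mem_tau_one.1 hg C (Or.inr hC)
  refine ⟨C, hC, hDC.ssubset_of_ne ?_, rmax_subtype hC.isBall hfix ?_ hD hDC⟩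
  · rintro rfl
    exact hD.not_extremal (extremal_iff.2 (Or.inr hfix))
  · rintro B (hB | hB)
    · rcases hC.isBall.subset_or_disjoint (hb B hB) with h | h | h
      · exact Or.inl h
      · -- A member of `F` inside `C` would make `C` fixed, hence extremal.
        refine absurd (extremal_iff.2 (Or.inr fun g hg => ?_)) hC.not_extremal
        exact image_eq_of_subset (hb B hB).nonempty hC.isBall h (mem_tau_one.1 hg B hB)
      · exact Or.inr h.symm
    · rcases hC.isBall.subset_or_disjoint hB.isBall with h | h | h
      · exact Or.inl h
      · exact Or.inl (RMaxNonExtremal.superset_of_subset hB hC h)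
      · exact Or.inr h.symm

open CategoryTheory in
/-- König's lemma for a sequence of finite nonempty levels with a parent relation. -/
lemma exists_branch {α : Type*} (M : ℕ → Set α) (hfin : ∀ k, (M k).Finite)
    (hne : ∀ k, (M k).Nonempty) (R : α → α → Prop)
    (hpar : ∀ k, ∀ d ∈ M (k + 1), ∃ c ∈ M k, R c d) :
    ∃ f : ℕ → α, (∀ k, f k ∈ M k) ∧ ∀ k, R (f k) (f (k + 1)) := by
  have hpar' : ∀ k, ∀ d : M (k + 1), ∃ c : M k, R c d := fun k d => by
    obtain ⟨c, hc, h⟩ := hpar k d d.2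
    exact ⟨⟨c, hc⟩, h⟩
  choose p hp using hpar'
  let T : ℕᵒᵖ ⥤ Type _ := Functor.ofOpSequence (X := fun k => (M k : Type _))
    (fun k => TypeCat.ofHom (p k))
  have h1 : ∀ j, Finite (T.obj j) := fun j => (hfin j.unop).to_subtype
  have h2 : ∀ j, Nonempty (T.obj j) := fun j => (hne j.unop).to_subtype
  obtain ⟨s, hs⟩ := nonempty_sections_of_finite_inverse_system T
  let f : ∀ k, M k := fun k => s (Opposite.op k)
  refine ⟨fun k => f k, fun k => (f k).2, fun k => ?_⟩
  have h3 := hs (homOfLE (Nat.le_succ k)).op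
  have h4 : p k (f (k + 1)) = f k := by
    rw [Functor.ofOpSequence_map_homOfLE_succ] at h3
    exact h3
  have := hp k (f (k + 1))
  rwa [h4] at this

/-- The sets of balls obtained from `𝓑` by repeatedly adjoining all `r`-maximal non-extremal
balls. -/
def level (𝓑 : Set (Set X)) : ℕ → Set (Set X)
  | 0 => 𝓑
  | k + 1 => level 𝓑 k ∪ {C | RMaxNonExtremal (level 𝓑 k) C}

end UltraGen

open UltraGen in
theorem two_conditions_of_no_extremal_strengthening
    {X : Type*} [MetricSpace X] [IsUltrametricDist X]
    (𝓑 : Set (Set X)) (h𝓑 : FDFamily 𝓑)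
    (h : ¬ ∃ 𝓑'' : Set (Set X), FDFamily 𝓑'' ∧ Strengthens 𝓑'' 𝓑 ∧
      ExtremalityProperty X 𝓑'') :
    (∃ 𝓑' : Set (Set X), FDFamily 𝓑' ∧ Strengthens 𝓑' 𝓑 ∧
        {C : Set X | RMaxNonExtremal 𝓑' C}.Infinite) ∨
    (∃ C : ℕ → Set X, (∀ k, IsBall (C k)) ∧ (∀ k, C (k + 1) ⊂ C k) ∧
        RMaxNonExtremal 𝓑 (C 0) ∧
        ∀ k, RMaxNonExtremal (X := ↥(C k)) ∅ (Subtype.val ⁻¹' C (k + 1))) := by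
  by_cases h1 : ∃ 𝓑' : Set (Set X), FDFamily 𝓑' ∧ Strengthens 𝓑' 𝓑 ∧
      {C : Set X | RMaxNonExtremal 𝓑' C}.Infinite
  · exact Or.inl h1
  right
  have hM : ∀ F : Set (Set X), F.Finite → (∀ B ∈ F, IsBall B) → 𝓑 ⊆ F →
      {C | RMaxNonExtremal F C}.Finite ∧ {C | RMaxNonExtremal F C}.Nonempty := by
    intro F hF hb hsub
    obtain ⟨G, hG, htau⟩ := exists_fd hF hb
    have hstr : Strengthens G 𝓑 := by
      unfold Strengthens
      rw [htau]
      exact fun g hg B hB => hg B (hsub hB)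
    rw [← rmax_congr htau]
    constructor
    · by_contra hinf
      exact h1 ⟨G, hG, hstr, hinf⟩
    · by_contra hemp
      refine h ⟨G, hG, hstr, fun C hC => ?_⟩
      by_contra hne
      obtain ⟨D, hD, -⟩ := exists_rmax hC hne
      exact hemp ⟨D, hD⟩
  have hlev : ∀ k, (level 𝓑 k).Finite ∧ (∀ B ∈ level 𝓑 k, IsBall B) ∧ 𝓑 ⊆ level 𝓑 k := by
    intro k
    induction k with
    | zero => exact ⟨h𝓑.1, h𝓑.2.1, subset_rfl⟩
    | succ k ih =>
      obtain ⟨i1, i2, i3⟩ := ih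
      refine ⟨i1.union (hM _ i1 i2 i3).1, ?_, i3.trans subset_union_left⟩
      rintro B (hB | hB)
      · exact i2 B hB
      · exact RMaxNonExtremal.isBall hB
  have hfin := fun k => hM _ (hlev k).1 (hlev k).2.1 (hlev k).2.2
  obtain ⟨C, hC, hR⟩ := exists_branch (fun k => {C | RMaxNonExtremal (level 𝓑 k) C})
    (fun k => (hfin k).1) (fun k => (hfin k).2)
    (fun C D => D ⊂ C ∧ RMaxNonExtremal (X := C) ∅ (Subtype.val ⁻¹' D))
    (fun k D hD => exists_parent (hlev k).2.1 (hfin k).1 hD)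
  exact ⟨C, fun k => RMaxNonExtremal.isBall (hC k), fun k => (hR k).1, hC 0, fun k => (hR k).2⟩
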